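/- For every integer d ≥ 3, the coefficients of Theorem 1 satisfy the test-curve relation coming from intersecting TR_d with a pencil of irreducible nodal curves: (4d−8)·B₀(d) − B₁(d) = (d−1)·N(d) + 3·N₂(d) + 3·(d−2)·e(d, 2d−4) + 128·binom(2d−4, d) + 2·binom(2d−4, d−1). -/

import Mathlib

/-- The factorial of an integer `n`, interpreted as `0! = 1` extended by `n! = (n.toNat)!`
(only ever applied to nonnegative integers). -/
noncomputable def zfact (n : ℤ) : ℚ := (Nat.factorial n.toNat : ℚ)

/-- `1/n!` for an integer `n`, with the convention `1/n! = 0` whenever `n < 0`. -/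
noncomputable def invfact (n : ℤ) : ℚ :=
  if 0 ≤ n then (Nat.factorial n.toNat : ℚ)⁻¹ else 0

/-- The binomial coefficient `binom(n, k)` for integers, equal to `0` when `k > n` or `k < 0`. -/
noncomputable def zbinom (n k : ℤ) : ℚ :=
  if 0 ≤ k ∧ k ≤ n then (Nat.choose n.toNat k.toNat : ℚ) else 0

/-- `a(d, g) = (2d−g−1)·g!/(d!·(g−d+1)!)` from Proposition 2.1. -/
noncomputable def aCount (d g : ℤ) : ℚ :=
  ((2 * d - g - 1 : ℤ) : ℚ) * zfact g * invfact d * invfact (g - d + 1)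

/-- `b(d, g) = (2d−g−1)·(2d−g)·(2d−g+1)·g!/(d!·(g−d)!)` from Proposition 2.1. -/
noncomputable def bCount (d g : ℤ) : ℚ :=
  ((2 * d - g - 1 : ℤ) : ℚ) * ((2 * d - g : ℤ) : ℚ) * ((2 * d - g + 1 : ℤ) : ℚ) *
    zfact g * invfact d * invfact (g - d)

/-- `c(d, g, γ) = (γ²·(2d−g) − γ)·binom(g, d)` from Proposition 2.1. -/
noncomputable def cCount (d g γ : ℤ) : ℚ :=
  (((γ : ℚ) ^ 2 * ((2 * d - g : ℤ) : ℚ) - (γ : ℚ))) * zbinom g d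

/-- `e(d, g) = 8·g!/((d−3)!·(g−d+2)!) − 8·g!/(d!·(g−d−1)!)` from Proposition 2.1. -/
noncomputable def eCount (d g : ℤ) : ℚ :=
  8 * zfact g * invfact (d - 3) * invfact (g - d + 2) -
    8 * zfact g * invfact d * invfact (g - d - 1)

/-- `N(d)`, the number of pencils of degree `d` with two unspecified triple ramification
points on a general curve of genus `2d−4` (Proposition 2.2 (2)). -/
noncomputable def Ncount (d : ℤ) : ℚ :=
  48 * (6 * (d : ℚ) ^ 2 - 28 * (d : ℚ) + 35) * zfact (2 * d - 4) * invfact d * invfact (d - 3)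

/-- `N₁(d)` from Proposition 2.2 (3). -/
noncomputable def N1count (d : ℤ) : ℚ :=
  24 * (12 * (d : ℚ) ^ 3 - 92 * (d : ℚ) ^ 2 + 240 * (d : ℚ) - 215) *
    zfact (2 * d - 4) * invfact d * invfact (d - 2)

/-- `N₂(d)` from Theorem 5.4. -/
noncomputable def N2count (d : ℤ) : ℚ :=
  6 * (40 * (d : ℚ) ^ 2 - 179 * (d : ℚ) + 212) * zfact (2 * d - 4) * invfact d * invfact (d - 3)

/-- `N₃(d)` from Theorem 5.6. -/
noncomputable def N3count (d : ℤ) : ℚ :=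
  84 * ((d : ℚ) - 3) * (2 * (d : ℚ) ^ 2 - 10 * (d : ℚ) + 13) *
    zfact (2 * d - 4) * invfact d * invfact (d - 2)

/-- The overall constant `K(d) = 2·(2d−6)!/(d!·(d−3)!)` of Theorem 1. -/
noncomputable def Kconst (d : ℤ) : ℚ := 2 * zfact (2 * d - 6) * invfact d * invfact (d - 3)

/-- The `λ`-coefficient `A(d) = K(d)·24·(36d⁴−36d³−640d²+1885d−1475)` of Theorem 1. -/
noncomputable def Acoeff (d : ℤ) : ℚ :=
  Kconst d * (24 * (36 * (d : ℚ) ^ 4 - 36 * (d : ℚ) ^ 3 - 640 * (d : ℚ) ^ 2 +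
    1885 * (d : ℚ) - 1475))

/-- The `δ₀`-coefficient `B₀(d) = K(d)·(144d⁴−528d³−298d²+3049d−2940)` of Theorem 1. -/
noncomputable def B0coeff (d : ℤ) : ℚ :=
  Kconst d * (144 * (d : ℚ) ^ 4 - 528 * (d : ℚ) ^ 3 - 298 * (d : ℚ) ^ 2 +
    3049 * (d : ℚ) - 2940)

/-- The `δᵢ`-coefficient `Bᵢ(d) = K(d)·12·i·(2d−3−i)·(36d³−156d²+180d−5)`, `i ≥ 1`,
of Theorem 1. -/
noncomputable def Bcoeff (d i : ℤ) : ℚ :=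
  Kconst d * (12 * (i : ℚ) * (2 * (d : ℚ) - 3 - (i : ℚ)) *
    (36 * (d : ℚ) ^ 3 - 156 * (d : ℚ) ^ 2 + 180 * (d : ℚ) - 5))

/-!
With `1/n! = 0` for negative `n`, the recursion `1/(n-1)! = n · 1/n!` and the formula
`binom(n, k) = n!/(k!·(n-k)!)` hold for all integers, so no small values of `d` need separate
treatment. Every term on the right is then a polynomial multiple of
`M(d) = (2d-4)!/(d!·(d-3)!)`, and every term on the left one of `K(d)`. Since
`M(d) = (d-2)·(2d-5)·K(d)`, the relation reduces to an identity of polynomials in `d`.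
-/

theorem zfact_add_one {n : ℤ} (hn : 0 ≤ n) : zfact (n + 1) = ((n : ℚ) + 1) * zfact n := by
  lift n to ℕ using hn
  simp only [zfact, Int.toNat_natCast_add_one, Int.toNat_natCast, Nat.factorial_succ,
    Nat.cast_mul, Nat.cast_add, Nat.cast_one, Int.cast_natCast]

theorem invfact_natCast (n : ℕ) : invfact n = (n.factorial : ℚ)⁻¹ := by
  simp [invfact]

theorem invfact_of_neg {n : ℤ} (hn : n < 0) : invfact n = 0 :=
  if_neg hn.not_ge

theorem invfact_sub_one (n : ℤ) : invfact (n - 1) = (n : ℚ) * invfact n := by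
  rcases lt_trichotomy n 0 with hneg | rfl | hpos
  · rw [invfact_of_neg hneg, invfact_of_neg (by lia), mul_zero]
  · rw [invfact_of_neg (by decide), Int.cast_zero, zero_mul]
  · obtain ⟨k, rfl⟩ : ∃ k : ℕ, n = (k + 1 : ℕ) := ⟨(n - 1).toNat, by lia⟩
    have hpred : ((k + 1 : ℕ) : ℤ) - 1 = k := by simp
    rw [hpred, invfact_natCast, invfact_natCast, Nat.factorial_succ]
    push_cast
    field_simp

theorem invfact_sub_three (n : ℤ) :
    invfact (n - 3) = (n : ℚ) * (n - 1) * (n - 2) * invfact n := by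
  calc invfact (n - 3)
      = invfact (n - 1 - 1 - 1) := by congr 1; ring
    _ = (n : ℚ) * (n - 1) * (n - 2) * invfact n := by
      simp only [invfact_sub_one]
      push_cast
      ring

theorem zbinom_eq_zfact_mul_invfact (n k : ℤ) :
    zbinom n k = zfact n * invfact k * invfact (n - k) := by
  by_cases hk : 0 ≤ k ∧ k ≤ n
  · obtain ⟨hk0, hkn⟩ := hk
    lift k to ℕ using hk0
    lift n to ℕ using by lia
    have hkn' : k ≤ n := by exact_mod_cast hkn
    rw [← Nat.cast_sub hkn', invfact_natCast, invfact_natCast]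
    simp only [zbinom, zfact, Int.toNat_natCast]
    rw [if_pos ⟨by positivity, hkn⟩, Nat.cast_choose ℚ hkn']
    field_simp
  · rw [zbinom, if_neg hk]
    rcases not_and_or.mp hk with hk0 | hkn
    · rw [invfact_of_neg (not_le.mp hk0), mul_zero, zero_mul]
    · rw [invfact_of_neg (by lia : n - k < 0), mul_zero]

theorem eCount_eq_mul_zfact_mul_invfact (d g : ℤ) :
    eCount d g =
      8 * ((d : ℚ) * (d - 1) * (d - 2) - ((g : ℚ) - d + 2) * (g - d + 1) * (g - d)) *
        (zfact g * invfact d * invfact (g - d + 2)) := by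
  have hlast : g - d - 1 = g - d + 2 - 3 := by ring
  rw [eCount, hlast, invfact_sub_three, invfact_sub_three]
  push_cast
  ring

/-- `M(d) = (2d−4)!/(d!·(d−3)!)`, the common factor of all the enumerative counts on a general
curve of genus `2d−4` that enter the test-curve relation. It vanishes for `d < 3`, by the
convention on `invfact`. -/
noncomputable def Mconst (d : ℤ) : ℚ := zfact (2 * d - 4) * invfact d * invfact (d - 3)

theorem Mconst_eq_mul_Kconst {d : ℤ} (hd : 3 ≤ d) :
    Mconst d = ((d : ℚ) - 2) * (2 * d - 5) * Kconst d := by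
  have hfact : zfact (2 * d - 4) = (2 * (d : ℚ) - 4) * (2 * d - 5) * zfact (2 * d - 6) := by
    calc zfact (2 * d - 4)
        = zfact (2 * d - 6 + 1 + 1) := by congr 1; ring
      _ = (2 * (d : ℚ) - 4) * (2 * d - 5) * zfact (2 * d - 6) := by
        rw [zfact_add_one (by lia), zfact_add_one (by lia)]
        push_cast
        ring
  rw [Mconst, Kconst, hfact]
  ring

theorem Ncount_eq_mul_Mconst (d : ℤ) :
    Ncount d = 48 * (6 * (d : ℚ) ^ 2 - 28 * d + 35) * Mconst d := by
  rw [Ncount, Mconst]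
  ring

theorem N2count_eq_mul_Mconst (d : ℤ) :
    N2count d = 6 * (40 * (d : ℚ) ^ 2 - 179 * d + 212) * Mconst d := by
  rw [N2count, Mconst]
  ring

theorem eCount_eq_mul_Mconst (d : ℤ) :
    eCount d (2 * d - 4) = 48 * ((d : ℚ) - 2) * Mconst d := by
  have harg : 2 * d - 4 - d + 2 = d - 2 := by ring
  have hpred : invfact (d - 3) = ((d : ℚ) - 2) * invfact (d - 2) := by
    calc invfact (d - 3)
        = invfact (d - 2 - 1) := by congr 1; ring
      _ = ((d : ℚ) - 2) * invfact (d - 2) := by rw [invfact_sub_one]; push_cast; rfl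
  rw [eCount_eq_mul_zfact_mul_invfact, harg, Mconst, hpred]
  push_cast
  ring

theorem zbinom_degree_eq_mul_Mconst (d : ℤ) :
    zbinom (2 * d - 4) d = ((d : ℚ) - 3) * Mconst d := by
  have harg : 2 * d - 4 - d = d - 3 - 1 := by ring
  rw [zbinom_eq_zfact_mul_invfact, harg, invfact_sub_one, Mconst]
  push_cast
  ring

theorem zbinom_degree_sub_one_eq_mul_Mconst (d : ℤ) :
    zbinom (2 * d - 4) (d - 1) = (d : ℚ) * Mconst d := by
  have harg : 2 * d - 4 - (d - 1) = d - 3 := by ring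
  rw [zbinom_eq_zfact_mul_invfact, harg, invfact_sub_one, Mconst]
  ring

theorem boundary_coeff_eq_mul_Kconst (d : ℤ) :
    (4 * (d : ℚ) - 8) * B0coeff d - Bcoeff d 1 =
      4 * (72 * (d : ℚ) ^ 3 - 192 * d ^ 2 - 161 * d + 582) *
        (((d : ℚ) - 2) * (2 * d - 5) * Kconst d) := by
  rw [B0coeff, Bcoeff]
  push_cast
  ring

theorem enumerative_count_eq_mul_Mconst (d : ℤ) :
    ((d : ℚ) - 1) * Ncount d + 3 * N2count d + 3 * ((d : ℚ) - 2) * eCount d (2 * d - 4) +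
        128 * zbinom (2 * d - 4) d + 2 * zbinom (2 * d - 4) (d - 1) =
      4 * (72 * (d : ℚ) ^ 3 - 192 * d ^ 2 - 161 * d + 582) * Mconst d := by
  rw [Ncount_eq_mul_Mconst, N2count_eq_mul_Mconst, eCount_eq_mul_Mconst,
    zbinom_degree_eq_mul_Mconst, zbinom_degree_sub_one_eq_mul_Mconst]
  ring

/-- the test-curve relation from intersecting `TR_d` with a pencil of irreducible
nodal curves (equation (5) in the proof of Theorem 4.2), for every integer `d ≥ 3`:
`(4d−8)·B₀(d) − B₁(d) = (d−1)·N(d) + 3·N₂(d) + 3·(d−2)·e(d, 2d−4) + 128·binom(2d−4, d)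
 + 2·binom(2d−4, d−1)`. -/
theorem nodal_test_curve_relation (d : ℤ) (hd : 3 ≤ d) :
    (4 * (d : ℚ) - 8) * B0coeff d - Bcoeff d 1 =
      ((d : ℚ) - 1) * Ncount d + 3 * N2count d + 3 * ((d : ℚ) - 2) * eCount d (2 * d - 4) +
        128 * zbinom (2 * d - 4) d + 2 * zbinom (2 * d - 4) (d - 1) := by
  rw [boundary_coeff_eq_mul_Kconst, enumerative_count_eq_mul_Mconst, Mconst_eq_mul_Kconst hd]
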